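/- Let Ω ⊆ D(0, r) be an open set with 0 a non-isolated boundary point, Γ = ∂Ω ∩ D(0, r), and let S be holomorphic on Ω, continuous on Ω ∪ Γ, bounded on Ω, and satisfying S(ζ) = conj(ζ)·ζ^n for all ζ ∈ Γ. Then lim_{z → 0, z ∈ Ω ∪ Γ \ {0}} S(z)/z^n = 0. -/

import Mathlib

open Complex Metric Set Filter

local notation "conj'" => starRingEnd ℂ

/-!
Extend `S` by `φ(z) = z̄ zⁿ` to a function `F` on the disc: it is continuous, and holomorphic
wherever `F ≠ φ`. Nothing is known about the boundary of `{F = φ}`, so test functions are truncated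
by a cutoff in `|F - φ|²`; a Caccioppoli estimate bounds `F'` in `L²` off `{F = φ}`, and letting the
truncation tend to `1` shows that `∂̄F = zⁿ 1_{F = φ}` weakly, with no contribution from the
boundary. By the Cauchy–Pompeiu formula, near `0` the function `F` is, up to a constant factor, the
Cauchy transform of `zⁿ μ` with `μ` bounded, and expanding
`ζⁿ / (ζ - z) = ζⁿ⁻¹ + ⋯ + zⁿ⁻¹ + zⁿ / (ζ - z)` gives `F = p + zⁿ B` with `deg p < n` and `B`
continuous at `0`. Since `F / zⁿ = z̄ → 0` along the boundary points, `p = 0` and `B(0) = 0`.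
-/

section

open MeasureTheory
open scoped Topology

/-- `f` has Wirtinger derivatives `∂f = a` and `∂̄f = b` at `z`: it is real-differentiable there
with differential `w ↦ a w + b w̄`. -/
def HasWirtingerDerivAt (f : ℂ → ℂ) (a b z : ℂ) : Prop :=
  HasFDerivAt f (a • ContinuousLinearMap.id ℝ ℂ + b • (conjCLE : ℂ →L[ℝ] ℂ)) z

/-- The Wirtinger derivative `∂f = (∂ₓf - i ∂ᵧf) / 2`, with junk value `0` where `f` is not
real-differentiable. -/
noncomputable def dz (f : ℂ → ℂ) (z : ℂ) : ℂ := (fderiv ℝ f z 1 - I * fderiv ℝ f z I) / 2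

/-- The Wirtinger derivative `∂̄f = (∂ₓf + i ∂ᵧf) / 2`, with junk value `0` where `f` is not
real-differentiable. -/
noncomputable def dbar (f : ℂ → ℂ) (z : ℂ) : ℂ := (fderiv ℝ f z 1 + I * fderiv ℝ f z I) / 2

theorem smul_id_add_smul_conjCLE_apply (a b w : ℂ) :
    (a • ContinuousLinearMap.id ℝ ℂ + b • (conjCLE : ℂ →L[ℝ] ℂ)) w = a * w + b * conj' w :=
  rfl

namespace HasWirtingerDerivAt

variable {f g : ℂ → ℂ} {a b c d z : ℂ}

theorem of_hasFDerivAt {L : ℂ →L[ℝ] ℂ} (hf : HasFDerivAt f L z)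
    (hL : ∀ w, L w = a * w + b * conj' w) : HasWirtingerDerivAt f a b z := by
  refine HasFDerivAt.congr_fderiv hf (ContinuousLinearMap.ext fun w => ?_)
  rw [hL, smul_id_add_smul_conjCLE_apply]

theorem of_hasDerivAt (hf : HasDerivAt f a z) : HasWirtingerDerivAt f a 0 z :=
  of_hasFDerivAt (hf.hasFDerivAt.restrictScalars ℝ) fun w => by simp [mul_comm]

theorem sub (hf : HasWirtingerDerivAt f a b z) (hg : HasWirtingerDerivAt g c d z) :
    HasWirtingerDerivAt (fun w => f w - g w) (a - c) (b - d) z :=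
  of_hasFDerivAt (HasFDerivAt.sub hf hg) fun w => by
    simp only [sub_apply, smul_id_add_smul_conjCLE_apply]
    ring

theorem mul (hf : HasWirtingerDerivAt f a b z) (hg : HasWirtingerDerivAt g c d z) :
    HasWirtingerDerivAt (fun w => f w * g w) (a * g z + f z * c) (b * g z + f z * d) z :=
  of_hasFDerivAt (HasFDerivAt.mul hf hg) fun w => by
    rw [add_apply, smul_apply, smul_apply, smul_id_add_smul_conjCLE_apply,
      smul_id_add_smul_conjCLE_apply, smul_eq_mul, smul_eq_mul]
    ring

theorem conj (hf : HasWirtingerDerivAt f a b z) :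
    HasWirtingerDerivAt (fun w => conj' (f w)) (conj' b) (conj' a) z :=
  of_hasFDerivAt ((conjCLE : ℂ →L[ℝ] ℂ).hasFDerivAt.comp z hf) fun w => by
    simp only [ContinuousLinearMap.comp_apply, smul_id_add_smul_conjCLE_apply,
      ContinuousLinearEquiv.coe_coe, conjCLE_apply, map_add, map_mul, conj_conj]
    ring

theorem comp_normSq {τ : ℝ → ℝ} {τ' : ℝ} (hf : HasWirtingerDerivAt f a b z)
    (hτ : HasDerivAt τ τ' (normSq (f z))) :
    HasWirtingerDerivAt (fun w => (τ (normSq (f w)) : ℂ))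
      (τ' * (a * conj' (f z) + f z * conj' b)) (τ' * (b * conj' (f z) + f z * conj' a)) z := by
  have hre : HasFDerivAt (fun w => (f w * conj' (f w)).re) _ z :=
    reCLM.hasFDerivAt.comp z (hf.mul hf.conj)
  simp only [mul_conj, ofReal_re] at hre
  refine of_hasFDerivAt (ofRealCLM.hasFDerivAt.comp z (hτ.hasFDerivAt.comp z hre)) fun w => ?_
  simp only [ContinuousLinearMap.comp_apply, smul_id_add_smul_conjCLE_apply, ofRealCLM_apply,
    reCLM_apply, ContinuousLinearMap.toSpanSingleton_apply, smul_eq_mul, ofReal_mul,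
    re_eq_add_conj, map_add, map_mul, conj_conj]
  ring

theorem dbar_eq (hf : HasWirtingerDerivAt f a b z) : dbar f z = b := by
  rw [dbar, HasFDerivAt.fderiv hf]
  rw [smul_id_add_smul_conjCLE_apply, smul_id_add_smul_conjCLE_apply, map_one, conj_I]
  linear_combination (a - b) / 2 * I_mul_I

end HasWirtingerDerivAt

theorem hasWirtingerDerivAt_dz_dbar {f : ℂ → ℂ} {z : ℂ} (hf : DifferentiableAt ℝ f z) :
    HasWirtingerDerivAt f (dz f z) (dbar f z) z := by
  refine .of_hasFDerivAt hf.hasFDerivAt fun w => ?_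
  have hw : fderiv ℝ f z w = w.re * fderiv ℝ f z 1 + w.im * fderiv ℝ f z I := by
    rw [← real_smul, ← real_smul, ← map_smul, ← map_smul, ← map_add]
    simp
  have hre := add_conj w
  have him := sub_conj w
  push_cast at hre him
  rw [hw, dz, dbar]
  linear_combination -fderiv ℝ f z 1 / 2 * hre + I * fderiv ℝ f z I / 2 * him
    + w.im * fderiv ℝ f z I * I_mul_I

section Calculus

variable {f : ℂ → ℂ} {U : Set ℂ}

theorem continuousOn_dbar (hU : IsOpen U) (hf : ContDiffOn ℝ 1 f U) : ContinuousOn (dbar f) U := by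
  have hf' := hf.continuousOn_fderiv_of_isOpen hU le_rfl
  unfold dbar
  fun_prop

theorem continuousOn_dz (hU : IsOpen U) (hf : ContDiffOn ℝ 1 f U) : ContinuousOn (dz f) U := by
  have hf' := hf.continuousOn_fderiv_of_isOpen hU le_rfl
  unfold dz
  fun_prop

theorem continuous_dbar (hf : ContDiff ℝ 1 f) : Continuous (dbar f) :=
  continuousOn_univ.1 (continuousOn_dbar isOpen_univ hf.contDiffOn)

theorem continuous_dz (hf : ContDiff ℝ 1 f) : Continuous (dz f) :=
  continuousOn_univ.1 (continuousOn_dz isOpen_univ hf.contDiffOn)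

theorem dbar_eq_zero_of_notMem_tsupport {z : ℂ} (hz : z ∉ tsupport f) : dbar f z = 0 := by
  simp [dbar, fderiv_of_notMem_tsupport ℝ hz]

theorem dz_eq_zero_of_notMem_tsupport {z : ℂ} (hz : z ∉ tsupport f) : dz f z = 0 := by
  simp [dz, fderiv_of_notMem_tsupport ℝ hz]

theorem contDiff_mul_of_tsupport_subset {k : ℂ → ℂ} (hU : IsOpen U) (hf : ContDiffOn ℝ 1 f U)
    (hk : ContDiff ℝ 1 k) (hkU : tsupport k ⊆ U) : ContDiff ℝ 1 fun z => f z * k z := by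
  refine contDiff_iff_contDiffAt.2 fun z => ?_
  by_cases hz : z ∈ tsupport k
  · exact (hf.contDiffAt (hU.mem_nhds (hkU hz))).mul hk.contDiffAt
  · refine contDiffAt_const (c := 0) |>.congr_of_eventuallyEq ?_
    filter_upwards [notMem_tsupport_iff_eventuallyEq.1 hz] with w hw
    simp [hw]

@[simp]
theorem dbar_const (c z : ℂ) : dbar (fun _ => c) z = 0 := by simp [dbar]

theorem dbar_congr {g : ℂ → ℂ} {z : ℂ} (h : f =ᶠ[𝓝 z] g) : dbar f z = dbar g z := by
  rw [dbar, dbar, h.fderiv_eq]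

theorem integral_fderiv_apply_eq_zero (hf : ContDiff ℝ 1 f) (hc : HasCompactSupport f) (v : ℂ) :
    ∫ z, fderiv ℝ f z v = 0 := by
  simpa using integral_smul_fderiv_eq_neg_fderiv_smul_of_integrable (𝕜 := ℝ)
    (μ := (volume : Measure ℂ)) (f := fun _ => (1 : ℝ)) (g := f) (v := v) (by simp)
    (by simpa using ((hf.continuous_fderiv one_ne_zero).clm_apply continuous_const
      ).integrable_of_hasCompactSupport (hc.fderiv_apply ℝ v))
    (by simpa using hf.continuous.integrable_of_hasCompactSupport hc) (by fun_prop)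
    (fun z _ => hf.differentiable one_ne_zero z)

theorem integrable_of_continuousOn_isCompact {E : Type*} [NormedAddCommGroup E] {h : ℂ → E}
    {K : Set ℂ} (hK : IsCompact K) (hh : ContinuousOn h K) (h0 : ∀ z ∉ K, h z = 0) :
    Integrable h :=
  (integrableOn_iff_integrable_of_support_subset (Function.support_subset_iff'.2 h0)).1
    (hh.integrableOn_compact hK)

theorem integrable_dbar (hf : ContDiff ℝ 1 f) (hc : HasCompactSupport f) : Integrable (dbar f) :=
  integrable_of_continuousOn_isCompact hc (continuous_dbar hf).continuousOn
    fun _ => dbar_eq_zero_of_notMem_tsupport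

theorem integral_dbar_eq_zero (hf : ContDiff ℝ 1 f) (hc : HasCompactSupport f) :
    ∫ z, dbar f z = 0 := by
  have hint (v : ℂ) : Integrable fun z => fderiv ℝ f z v :=
    ((hf.continuous_fderiv one_ne_zero).clm_apply
      continuous_const).integrable_of_hasCompactSupport (hc.fderiv_apply ℝ v)
  simp only [dbar]
  rw [integral_div, integral_add (hint _) ((hint _).const_mul _), integral_const_mul,
    integral_fderiv_apply_eq_zero hf hc, integral_fderiv_apply_eq_zero hf hc]
  simp

end Calculus

section Cutoff

/-- A smooth cutoff on `ℝ` at scale `δ`: it vanishes for `t ≤ δ` and equals `1` for `t ≥ 2δ`. -/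
noncomputable def cutoff (δ t : ℝ) : ℝ := Real.smoothTransition (t / δ - 1)

variable {δ t : ℝ}

theorem contDiff_cutoff (δ : ℝ) : ContDiff ℝ 1 (cutoff δ) :=
  Real.smoothTransition.contDiff.comp (by fun_prop)

theorem cutoff_nonneg (δ t : ℝ) : 0 ≤ cutoff δ t := Real.smoothTransition.nonneg _

theorem cutoff_le_one (δ t : ℝ) : cutoff δ t ≤ 1 := Real.smoothTransition.le_one _

theorem cutoff_eventuallyEq_zero (hδ : 0 < δ) : cutoff δ =ᶠ[𝓝 0] 0 := by
  filter_upwards [Iio_mem_nhds hδ] with t ht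
  exact Real.smoothTransition.zero_of_nonpos (by rw [sub_nonpos, div_le_one hδ]; exact ht.le)

theorem deriv_cutoff (δ t : ℝ) :
    deriv (cutoff δ) t = deriv Real.smoothTransition (t / δ - 1) / δ := by
  have hinner : HasDerivAt (fun t => t / δ - 1) (1 / δ) t :=
    ((hasDerivAt_id t).div_const δ).sub_const 1
  have hT := (Real.smoothTransition.contDiff (n := 1)).differentiable one_ne_zero (t / δ - 1)
  rw [div_eq_mul_one_div]
  exact (hT.hasDerivAt.comp t hinner).deriv

theorem deriv_cutoff_nonneg (hδ : 0 < δ) (t : ℝ) : 0 ≤ deriv (cutoff δ) t :=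
  (Real.smoothTransition.monotone.comp fun a b hab => by gcongr).deriv_nonneg

theorem exists_deriv_cutoff_mul_le : ∃ C, ∀ δ t, 0 < δ → deriv (cutoff δ) t * t ≤ C := by
  have hcont : Continuous (deriv Real.smoothTransition) :=
    (Real.smoothTransition.contDiff (n := 1)).continuous_deriv le_rfl
  obtain ⟨C, hC⟩ := (isCompact_Icc (a := (0 : ℝ)) (b := 1)).exists_bound_of_continuousOn
    (f := fun u => deriv Real.smoothTransition u * (u + 1)) (by fun_prop)
  refine ⟨C, fun δ t hδ => ?_⟩
  have hscale : deriv (cutoff δ) t * t =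
      deriv Real.smoothTransition (t / δ - 1) * ((t / δ - 1) + 1) := by
    rw [deriv_cutoff]
    ring
  rw [hscale]
  by_cases hu : t / δ - 1 ∈ Icc (0 : ℝ) 1
  · exact (le_abs_self _).trans (hC _ hu)
  · have hderiv : deriv Real.smoothTransition (t / δ - 1) = 0 := by
      rcases lt_or_ge (t / δ - 1) 0 with hneg | hnonneg
      · refine (EventuallyEq.deriv_eq (f := fun _ => 0) ?_).trans (deriv_const _ _)
        filter_upwards [Iio_mem_nhds hneg] with s hs
        exact Real.smoothTransition.zero_of_nonpos (le_of_lt hs)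
      · have hone : 1 < t / δ - 1 := not_le.1 fun h => hu ⟨hnonneg, h⟩
        refine (EventuallyEq.deriv_eq (f := fun _ => 1) ?_).trans (deriv_const _ _)
        filter_upwards [Ioi_mem_nhds hone] with s hs
        exact Real.smoothTransition.one_of_one_le (le_of_lt hs)
    simpa [hderiv] using (norm_nonneg _).trans (hC 0 (by simp))

theorem eventually_cutoff_eq_one (ht : 0 < t) : ∀ᶠ δ in 𝓝[>] 0, cutoff δ =ᶠ[𝓝 t] 1 := by
  filter_upwards [Ioo_mem_nhdsGT (half_pos ht)] with δ hδ
  filter_upwards [Ioi_mem_nhds (show 2 * δ < t by linarith [hδ.2])] with s hs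
  refine Real.smoothTransition.one_of_one_le ?_
  rw [le_sub_iff_add_le, le_div_iff₀ hδ.1]
  linarith [mem_Ioi.1 hs]

end Cutoff

theorem integrable_of_tendsto_of_integral_le {α : Type*} [MeasurableSpace α] {μ : Measure α}
    {f : ℕ → α → ℝ} {g : α → ℝ} {M : ℝ} (hint : ∀ n, Integrable (f n) μ)
    (hnonneg : ∀ n x, 0 ≤ f n x) (hM : ∀ n, ∫ x, f n x ∂μ ≤ M)
    (hlim : ∀ x, Tendsto (fun n => f n x) atTop (𝓝 (g x))) : Integrable g μ := by
  refine ⟨aestronglyMeasurable_of_tendsto_ae atTop (fun n => (hint n).aestronglyMeasurable)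
    (.of_forall hlim), ?_⟩
  calc ∫⁻ x, ‖g x‖ₑ ∂μ
      = ∫⁻ x, liminf (fun n => ‖f n x‖ₑ) atTop ∂μ :=
        lintegral_congr fun x => (hlim x).enorm.liminf_eq.symm
    _ ≤ liminf (fun n => ∫⁻ x, ‖f n x‖ₑ ∂μ) atTop :=
        lintegral_liminf_le' fun n => (hint n).aestronglyMeasurable.enorm
    _ ≤ ENNReal.ofReal M := by
        refine liminf_le_of_le (by isBoundedDefault) fun b hb => ?_
        obtain ⟨n, hn⟩ := hb.exists
        rw [← ofReal_integral_norm_eq_lintegral_enorm (hint n)] at hn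
        simp only [Real.norm_of_nonneg (hnonneg n _)] at hn
        exact hn.trans (ENNReal.ofReal_le_ofReal (hM n))
    _ < ⊤ := ENNReal.ofReal_lt_top

/-- `F` is continuous on the open set `U`, and holomorphic at each point of `U` where it differs
from the `C¹` function `φ`. -/
structure IsHolomorphicWhereNe (F φ : ℂ → ℂ) (U : Set ℂ) : Prop where
  isOpen : IsOpen U
  continuousOn : ContinuousOn F U
  contDiffOn : ContDiffOn ℝ 1 φ U
  differentiableAt : ∀ z ∈ U, F z ≠ φ z → DifferentiableAt ℂ F z

section Caccioppoli

/- The letters stand for the values at a point of a test function `k`, `k₁ = ∂k`, `k₂ = ∂̄k`,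
`G = F - φ`, `s = F'`, `m = ∂φ` and `b = ∂̄(F - φ)`, so that `s - m = ∂(F - φ)`; `τ` and `τ'` are
the values of a cutoff and its derivative at `|G|²`. -/
theorem caccioppoli_identity (k k₁ k₂ G s m b : ℂ) (τ τ' : ℝ) :
    (k₂ * conj' k + k * conj' k₁) * τ * (conj' G * s)
        + k * conj' k * τ' * (b * conj' G + G * conj' (s - m)) * (conj' G * s)
        + k * conj' k * τ * (conj' (s - m) * s) =
      ((τ + τ' * ‖G‖ ^ 2) * (‖k‖ * ‖s‖) ^ 2 : ℝ)
        + ((k₂ * conj' k + k * conj' k₁) * τ * (conj' G * s)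
          + k * conj' k * τ' * b * conj' G ^ 2 * s
          - k * conj' k * (τ + τ' * ‖G‖ ^ 2 : ℝ) * conj' m * s) := by
  push_cast
  rw [mul_pow, ← mul_conj' k, ← mul_conj' s, ← mul_conj' G, map_sub]
  ring

theorem norm_caccioppoli_error_le {k k₁ k₂ G s m b : ℂ} {τ τ' : ℝ} (hτ : 0 ≤ τ) (hτ' : 0 ≤ τ') :
    ‖(k₂ * conj' k + k * conj' k₁) * τ * (conj' G * s) + k * conj' k * τ' * b * conj' G ^ 2 * s
        - k * conj' k * (τ + τ' * ‖G‖ ^ 2 : ℝ) * conj' m * s‖ ≤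
      (τ + τ' * ‖G‖ ^ 2) * (‖k‖ * ‖s‖) * ((‖k₂‖ + ‖k₁‖) * ‖G‖ + ‖k‖ * (‖b‖ + ‖m‖)) := by
  have hfirst : ‖(k₂ * conj' k + k * conj' k₁) * τ * (conj' G * s)‖ ≤
      (τ + τ' * ‖G‖ ^ 2) * (‖k‖ * ‖s‖) * ((‖k₂‖ + ‖k₁‖) * ‖G‖) := by
    have hsum : ‖k₂ * conj' k + k * conj' k₁‖ ≤ ‖k‖ * (‖k₂‖ + ‖k₁‖) := by
      refine (norm_add_le _ _).trans_eq ?_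
      simp only [norm_mul, RCLike.norm_conj]
      ring
    calc ‖(k₂ * conj' k + k * conj' k₁) * τ * (conj' G * s)‖
        = ‖k₂ * conj' k + k * conj' k₁‖ * τ * (‖G‖ * ‖s‖) := by
          simp only [norm_mul, RCLike.norm_conj, norm_real, Real.norm_of_nonneg hτ]
      _ ≤ ‖k‖ * (‖k₂‖ + ‖k₁‖) * (τ + τ' * ‖G‖ ^ 2) * (‖G‖ * ‖s‖) := by
          gcongr
          exact le_add_of_nonneg_right (by positivity)
      _ = _ := by ring
  have hsecond : ‖k * conj' k * τ' * b * conj' G ^ 2 * s‖ ≤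
      (τ + τ' * ‖G‖ ^ 2) * (‖k‖ * ‖s‖) * (‖k‖ * ‖b‖) := by
    calc ‖k * conj' k * τ' * b * conj' G ^ 2 * s‖
        = τ' * ‖G‖ ^ 2 * (‖k‖ * ‖s‖) * (‖k‖ * ‖b‖) := by
          simp only [norm_mul, norm_pow, RCLike.norm_conj, norm_real, Real.norm_of_nonneg hτ']
          ring
      _ ≤ _ := by
          gcongr
          exact le_add_of_nonneg_left hτ
  have hthird : ‖k * conj' k * (τ + τ' * ‖G‖ ^ 2 : ℝ) * conj' m * s‖ =
      (τ + τ' * ‖G‖ ^ 2) * (‖k‖ * ‖s‖) * (‖k‖ * ‖m‖) := by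
    have hweight : 0 ≤ τ + τ' * ‖G‖ ^ 2 := by positivity
    simp only [norm_mul, RCLike.norm_conj, norm_real, Real.norm_of_nonneg hweight]
    ring
  refine (norm_sub_le_of_le (norm_add_le_of_le hfirst hsecond) hthird.le).trans_eq ?_
  ring

theorem caccioppoli_pointwise {k k₁ k₂ G s m b : ℂ} {τ τ' C : ℝ} (hτ : 0 ≤ τ) (hτ1 : τ ≤ 1)
    (hτ' : 0 ≤ τ') (hC : τ' * ‖G‖ ^ 2 ≤ C) :
    τ * (‖k‖ * ‖s‖) ^ 2 ≤
      2 * ((k₂ * conj' k + k * conj' k₁) * τ * (conj' G * s)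
        + k * conj' k * τ' * (b * conj' G + G * conj' (s - m)) * (conj' G * s)
        + k * conj' k * τ * (conj' (s - m) * s)).re
      + (1 + C) * ((‖k₂‖ + ‖k₁‖) * ‖G‖ + ‖k‖ * (‖b‖ + ‖m‖)) ^ 2 := by
  have herror := (abs_le.1 ((abs_re_le_norm _).trans (norm_caccioppoli_error_le (k := k)
    (k₁ := k₁) (k₂ := k₂) (G := G) (s := s) (m := m) (b := b) hτ hτ'))).1
  rw [caccioppoli_identity, add_re, ofReal_re]
  set a := τ + τ' * ‖G‖ ^ 2
  set H := (‖k₂‖ + ‖k₁‖) * ‖G‖ + ‖k‖ * (‖b‖ + ‖m‖)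
  have hτa : τ ≤ a := le_add_of_nonneg_right (by positivity)
  have haC : a ≤ 1 + C := add_le_add hτ1 hC
  have hyoung : 0 ≤ a * (‖k‖ * ‖s‖ - H) ^ 2 := by positivity
  have hleft : τ * (‖k‖ * ‖s‖) ^ 2 ≤ a * (‖k‖ * ‖s‖) ^ 2 := by gcongr
  have hright : a * H ^ 2 ≤ (1 + C) * H ^ 2 := by gcongr
  linarith

end Caccioppoli

namespace IsHolomorphicWhereNe

variable {F φ k : ℂ → ℂ} {U : Set ℂ}

theorem continuousOn_sub (h : IsHolomorphicWhereNe F φ U) :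
    ContinuousOn (fun z => F z - φ z) U :=
  h.continuousOn.sub h.contDiffOn.continuousOn

theorem isOpen_ne (h : IsHolomorphicWhereNe F φ U) : IsOpen {z ∈ U | F z ≠ φ z} := by
  convert h.continuousOn_sub.isOpen_inter_preimage h.isOpen
    (isOpen_compl_singleton (x := (0 : ℂ))) using 1
  ext z
  simp [sub_eq_zero]

theorem differentiableOn (h : IsHolomorphicWhereNe F φ U) :
    DifferentiableOn ℂ F {z ∈ U | F z ≠ φ z} :=
  fun z hz => (h.differentiableAt z hz.1 hz.2).differentiableWithinAt

variable {z : ℂ} (h : IsHolomorphicWhereNe F φ U) (hz : z ∈ {z ∈ U | F z ≠ φ z})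

include h hz

theorem contDiffAt_deriv : ContDiffAt ℝ 1 (deriv F) z :=
  ((h.differentiableOn.deriv h.isOpen_ne).analyticAt
    (h.isOpen_ne.mem_nhds hz)).contDiffAt.restrict_scalars ℝ

theorem contDiffAt_sub : ContDiffAt ℝ 1 (fun z => F z - φ z) z :=
  ((h.differentiableOn.analyticAt (h.isOpen_ne.mem_nhds hz)).contDiffAt.restrict_scalars ℝ).sub
    (h.contDiffOn.contDiffAt (h.isOpen.mem_nhds hz.1))

theorem hasWirtingerDerivAt_sub :
    HasWirtingerDerivAt (fun z => F z - φ z) (deriv F z - dz φ z) (-dbar φ z) z := by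
  have hφ := (h.contDiffOn.contDiffAt (h.isOpen.mem_nhds hz.1)).differentiableAt one_ne_zero
  simpa using (HasWirtingerDerivAt.of_hasDerivAt (h.differentiableAt z hz.1 hz.2).hasDerivAt).sub
    (hasWirtingerDerivAt_dz_dbar hφ)

theorem contDiffAt_conj_sub_mul_deriv :
    ContDiffAt ℝ 1 (fun z => conj' (F z - φ z) * deriv F z) z :=
  (conjCLE.contDiff.contDiffAt.comp z (h.contDiffAt_sub hz)).mul (h.contDiffAt_deriv hz)

theorem hasWirtingerDerivAt_deriv :
    HasWirtingerDerivAt (deriv F) (deriv (deriv F) z) 0 z :=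
  .of_hasDerivAt ((h.differentiableOn.deriv h.isOpen_ne).differentiableAt
    (h.isOpen_ne.mem_nhds hz)).hasDerivAt

end IsHolomorphicWhereNe

/-- The product `k τ(|F - φ|²) A` with `τ` the cutoff at scale `δ`: a test function in which the
cutoff removes the set `{F = φ}`, where `F` and `A` need not be differentiable. -/
noncomputable def truncation (F φ k A : ℂ → ℂ) (δ : ℝ) (z : ℂ) : ℂ :=
  k z * cutoff δ (normSq (F z - φ z)) * A z

namespace IsHolomorphicWhereNe

section Truncation

variable {F φ k A : ℂ → ℂ} {U : Set ℂ} (h : IsHolomorphicWhereNe F φ U) {δ : ℝ} {z : ℂ}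

include h

theorem dbar_truncation {a b c d : ℂ} (hz : z ∈ {z ∈ U | F z ≠ φ z})
    (hk : HasWirtingerDerivAt k a b z) (hA : HasWirtingerDerivAt A c d z) :
    dbar (truncation F φ k A δ) z =
      b * cutoff δ (normSq (F z - φ z)) * A z
        + k z * deriv (cutoff δ) (normSq (F z - φ z))
          * (-dbar φ z * conj' (F z - φ z) + (F z - φ z) * conj' (deriv F z - dz φ z)) * A z
        + k z * cutoff δ (normSq (F z - φ z)) * d := by
  have hτ := ((contDiff_cutoff δ).differentiable one_ne_zero (normSq (F z - φ z))).hasDerivAt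
  refine ((hk.mul ((h.hasWirtingerDerivAt_sub hz).comp_normSq hτ)).mul hA).dbar_eq.trans ?_
  ring

variable (hkU : tsupport k ⊆ U) (hδ : 0 < δ)

include hkU hδ

theorem truncation_eventuallyEq_zero (hz : z ∉ {z ∈ U | F z ≠ φ z}) :
    truncation F φ k A δ =ᶠ[𝓝 z] fun _ => 0 := by
  by_cases hzU : z ∈ U
  · have hGz : normSq (F z - φ z) = 0 :=
      normSq_eq_zero.2 (sub_eq_zero.2 (by_contra fun hne => hz ⟨hzU, hne⟩))
    have hcont : ContinuousAt (fun w => normSq (F w - φ w)) z :=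
      continuous_normSq.continuousAt.comp
        (h.continuousOn_sub.continuousAt (h.isOpen.mem_nhds hzU))
    filter_upwards [hcont.eventually (hGz ▸ cutoff_eventuallyEq_zero hδ)] with w hw
    simp [truncation, hw]
  · filter_upwards [notMem_tsupport_iff_eventuallyEq.1 fun hzk => hzU (hkU hzk)] with w hw
    simp [truncation, hw]

theorem dbar_truncation_eq_zero (hz : z ∉ {z ∈ U | F z ≠ φ z}) :
    dbar (truncation F φ k A δ) z = 0 :=
  (dbar_congr (h.truncation_eventuallyEq_zero hkU hδ hz)).trans (dbar_const 0 z)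

theorem contDiff_truncation (hk : ContDiff ℝ 1 k)
    (hA : ∀ z ∈ {z ∈ U | F z ≠ φ z}, ContDiffAt ℝ 1 A z) :
    ContDiff ℝ 1 (truncation F φ k A δ) := by
  refine contDiff_iff_contDiffAt.2 fun z => ?_
  by_cases hz : z ∈ {z ∈ U | F z ≠ φ z}
  · have hN : ContDiffAt ℝ 1 (fun w => normSq (F w - φ w)) z := by
      simpa only [normSq_eq_norm_sq] using (h.contDiffAt_sub hz).norm_sq ℝ
    have hT : ContDiffAt ℝ 1 (fun w => (cutoff δ (normSq (F w - φ w)) : ℂ)) z :=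
      ofRealCLM.contDiff.contDiffAt.comp z ((contDiff_cutoff δ).contDiffAt.comp z hN)
    exact (hk.contDiffAt.mul hT).mul (hA z hz)
  · exact contDiffAt_const.congr_of_eventuallyEq (h.truncation_eventuallyEq_zero hkU hδ hz)

end Truncation

end IsHolomorphicWhereNe

/-- The test function `|k|² τ(|G|²) Ḡ F'` with `G = F - φ` and `τ` the cutoff at scale `δ`: the real
part of its `∂̄`-derivative controls `|k|² τ(|G|²) |F'|²`, so its integral gives the energy estimate
for `F'`. -/
noncomputable def energyTest (F φ k : ℂ → ℂ) (δ : ℝ) : ℂ → ℂ :=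
  truncation F φ (fun z => k z * conj' (k z)) (fun z => conj' (F z - φ z) * deriv F z) δ

/-- The majorant, not involving `F'`, of the error terms in the energy estimate for `F'`. -/
noncomputable def energyBound (F φ k : ℂ → ℂ) (z : ℂ) : ℝ :=
  (‖dbar k z‖ + ‖dz k z‖) * ‖F z - φ z‖ + ‖k z‖ * (‖dbar φ z‖ + ‖dz φ z‖)

namespace IsHolomorphicWhereNe

section Energy

variable {F φ k : ℂ → ℂ} {U : Set ℂ} (h : IsHolomorphicWhereNe F φ U) (hk : ContDiff ℝ 1 k)
  (hc : HasCompactSupport k) (hkU : tsupport k ⊆ U) {C δ : ℝ} (hδ : 0 < δ)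

include h hk

theorem dbar_energyTest {z : ℂ} (hz : z ∈ {z ∈ U | F z ≠ φ z}) :
    dbar (energyTest F φ k δ) z =
      (dbar k z * conj' (k z) + k z * conj' (dz k z)) * cutoff δ (normSq (F z - φ z))
          * (conj' (F z - φ z) * deriv F z)
        + k z * conj' (k z) * deriv (cutoff δ) (normSq (F z - φ z))
          * (-dbar φ z * conj' (F z - φ z) + (F z - φ z) * conj' (deriv F z - dz φ z))
          * (conj' (F z - φ z) * deriv F z)
        + k z * conj' (k z) * cutoff δ (normSq (F z - φ z))
          * (conj' (deriv F z - dz φ z) * deriv F z) := by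
  have hkz := hasWirtingerDerivAt_dz_dbar (hk.differentiable one_ne_zero z)
  have hA := (h.hasWirtingerDerivAt_sub hz).conj.mul (h.hasWirtingerDerivAt_deriv hz)
  simpa only [energyTest, mul_zero, add_zero] using
    h.dbar_truncation (δ := δ) hz (hkz.mul hkz.conj) hA

include hkU hδ

theorem contDiff_energyTest : ContDiff ℝ 1 (energyTest F φ k δ) :=
  h.contDiff_truncation (tsupport_mul_subset_left.trans hkU) hδ (hk.mul (conjCLE.contDiff.comp hk))
    fun _ hz => h.contDiffAt_conj_sub_mul_deriv hz

theorem cutoff_mul_sq_norm_deriv_le (hC : ∀ t, deriv (cutoff δ) t * t ≤ C) (z : ℂ) :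
    cutoff δ (normSq (F z - φ z)) * (‖k z‖ * ‖deriv F z‖) ^ 2 ≤
      2 * (dbar (energyTest F φ k δ) z).re + (1 + C) * energyBound F φ k z ^ 2 := by
  by_cases hz : z ∈ {z ∈ U | F z ≠ φ z}
  · rw [h.dbar_energyTest hk hz, energyBound, ← norm_neg (dbar φ z)]
    exact caccioppoli_pointwise (cutoff_nonneg _ _) (cutoff_le_one _ _)
      (deriv_cutoff_nonneg hδ _) (by simpa [normSq_eq_norm_sq] using hC (normSq (F z - φ z)))
  · have hC0 : 0 ≤ C := by simpa using hC 0
    have hleft := congr_arg norm (h.truncation_eventuallyEq_zero (A := fun _ => 1) hkU hδ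
      hz).self_of_nhds
    have htest : dbar (energyTest F φ k δ) z = 0 :=
      h.dbar_truncation_eq_zero (tsupport_mul_subset_left.trans hkU) hδ hz
    simp only [truncation, mul_one, norm_zero, norm_mul, mul_eq_zero, norm_eq_zero,
      ofReal_eq_zero] at hleft
    rw [htest]
    rcases hleft with hzero | hzero <;> simp only [hzero, norm_zero, zero_mul, mul_zero, zero_re,
      zero_add, ne_eq, OfNat.ofNat_ne_zero, not_false_eq_true, zero_pow] <;> positivity

include hc

theorem integrable_cutoff_mul_sq_norm_deriv :
    Integrable fun z => cutoff δ (normSq (F z - φ z)) * (‖k z‖ * ‖deriv F z‖) ^ 2 := by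
  have hsmooth : ContDiff ℝ 1 (truncation F φ k
      (fun z => conj' (k z) * (deriv F z * conj' (deriv F z))) δ) :=
    h.contDiff_truncation hkU hδ hk fun z hz =>
      (conjCLE.contDiff.comp hk).contDiffAt.mul ((h.contDiffAt_deriv hz).mul
        (conjCLE.contDiff.contDiffAt.comp z (h.contDiffAt_deriv hz)))
  have hint : Integrable _ (volume : Measure ℂ) :=
    hsmooth.continuous.integrable_of_hasCompactSupport hc.mul_right.mul_right
  refine hint.norm.congr (.of_forall fun z => ?_)
  simp only [truncation, norm_mul, RCLike.norm_conj, norm_real,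
    Real.norm_of_nonneg (cutoff_nonneg δ _)]
  ring

omit hδ

theorem integrable_sq_energyBound : Integrable fun z => energyBound F φ k z ^ 2 := by
  unfold energyBound
  refine integrable_of_continuousOn_isCompact hc (ContinuousOn.mono ?_ hkU) fun z hz => by
    simp [dbar_eq_zero_of_notMem_tsupport hz, dz_eq_zero_of_notMem_tsupport hz,
      image_eq_zero_of_notMem_tsupport hz]
  have hF := h.continuousOn
  have hφ := h.contDiffOn.continuousOn
  have hdbarφ := continuousOn_dbar h.isOpen h.contDiffOn
  have hdzφ := continuousOn_dz h.isOpen h.contDiffOn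
  have hdbark := continuous_dbar hk
  have hdzk := continuous_dz hk
  have hk' := hk.continuous
  fun_prop

include hδ

theorem integral_cutoff_mul_sq_norm_deriv_le (hC : ∀ t, deriv (cutoff δ) t * t ≤ C) :
    ∫ z, cutoff δ (normSq (F z - φ z)) * (‖k z‖ * ‖deriv F z‖) ^ 2 ≤
      (1 + C) * ∫ z, energyBound F φ k z ^ 2 := by
  have htest := h.contDiff_energyTest hk hkU hδ
  have htestc : HasCompactSupport (energyTest F φ k δ) := hc.mul_right.mul_right.mul_right
  have hdbar := integrable_dbar htest htestc
  have hre : ∫ z, (dbar (energyTest F φ k δ) z).re = 0 := by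
    simpa [integral_dbar_eq_zero htest htestc] using reCLM.integral_comp_comm hdbar
  have hrhs := (h.integrable_sq_energyBound hk hc hkU).const_mul (1 + C)
  refine (integral_mono (h.integrable_cutoff_mul_sq_norm_deriv hk hc hkU hδ)
    ((hdbar.re.const_mul 2).add hrhs) (h.cutoff_mul_sq_norm_deriv_le hk hkU hδ hC)).trans_eq ?_
  simp only [Pi.add_apply]
  rw [integral_add (hdbar.re.const_mul 2) hrhs, integral_const_mul, integral_const_mul]
  simp [hre]

omit hδ

theorem integrable_indicator_sq_norm_deriv :
    Integrable ({z ∈ U | F z ≠ φ z}.indicator fun z => (‖k z‖ * ‖deriv F z‖) ^ 2) := by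
  obtain ⟨C, hC⟩ := exists_deriv_cutoff_mul_le
  obtain ⟨δ, -, hδpos, hδ⟩ := exists_seq_strictAnti_tendsto (0 : ℝ)
  refine integrable_of_tendsto_of_integral_le
    (fun n => h.integrable_cutoff_mul_sq_norm_deriv hk hc hkU (hδpos n)) (fun n z => ?_)
    (fun n => h.integral_cutoff_mul_sq_norm_deriv_le hk hc hkU (hδpos n) (hC _ · (hδpos n)))
    fun z => ?_
  · exact mul_nonneg (cutoff_nonneg _ _) (sq_nonneg _)
  by_cases hz : z ∈ {z ∈ U | F z ≠ φ z}
  · have hone := eventually_cutoff_eq_one (normSq_pos.2 (sub_ne_zero.2 hz.2))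
    refine tendsto_const_nhds.congr' ?_
    filter_upwards [(tendsto_nhdsWithin_iff.2 ⟨hδ, .of_forall hδpos⟩).eventually hone] with n hn
    simp [indicator_of_mem hz, hn.self_of_nhds]
  · rw [indicator_of_notMem hz]
    refine tendsto_const_nhds.congr fun n => ?_
    by_cases hzU : z ∈ U
    · have hzero : F z - φ z = 0 := sub_eq_zero.2 (by_contra fun hne => hz ⟨hzU, hne⟩)
      simp [hzero, (cutoff_eventuallyEq_zero (hδpos n)).self_of_nhds]
    · simp [image_eq_zero_of_notMem_tsupport fun hzk => hzU (hkU hzk)]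

end Energy

end IsHolomorphicWhereNe

/-- `∂̄F = f` in the sense of distributions on `U`, tested against compactly supported `C¹`
functions. -/
def HasWeakDbarOn (U : Set ℂ) (F f : ℂ → ℂ) : Prop :=
  ∀ k : ℂ → ℂ, ContDiff ℝ 1 k → HasCompactSupport k → tsupport k ⊆ U →
    ∫ z, F z * dbar k z = -∫ z, f z * k z

-- As in `caccioppoli_identity`, except that `b = ∂̄φ`.
theorem norm_truncation_sub_le {k k₂ G s m b : ℂ} {τ τ' C : ℝ} (hτ : 0 ≤ τ) (hτ1 : τ ≤ 1)
    (hτ' : 0 ≤ τ') (hC : τ' * ‖G‖ ^ 2 ≤ C) :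
    ‖k₂ * τ * G + k * τ' * (-b * conj' G + G * conj' (s - m)) * G + k * τ * -b‖ ≤
      C * (‖k‖ * ‖s‖) + (‖k₂‖ * ‖G‖ + ‖k‖ * ((C + 1) * ‖b‖ + C * ‖m‖)) := by
  have hfirst : ‖k₂ * τ * G‖ ≤ ‖k₂‖ * 1 * ‖G‖ := by
    rw [norm_mul, norm_mul, norm_real, Real.norm_of_nonneg hτ]
    gcongr
  have hsum : ‖-b * conj' G + G * conj' (s - m)‖ ≤ ‖G‖ * (‖b‖ + (‖s‖ + ‖m‖)) := by
    calc ‖-b * conj' G + G * conj' (s - m)‖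
        ≤ ‖b‖ * ‖G‖ + ‖G‖ * ‖s - m‖ := by
          simpa only [norm_mul, norm_neg, RCLike.norm_conj]
            using norm_add_le (-b * conj' G) (G * conj' (s - m))
      _ ≤ ‖b‖ * ‖G‖ + ‖G‖ * (‖s‖ + ‖m‖) := by
          gcongr
          exact norm_sub_le _ _
      _ = _ := by ring
  have hsecond : ‖k * τ' * (-b * conj' G + G * conj' (s - m)) * G‖ ≤
      ‖k‖ * C * (‖b‖ + (‖s‖ + ‖m‖)) := by
    rw [norm_mul, norm_mul, norm_mul, norm_real, Real.norm_of_nonneg hτ']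
    calc ‖k‖ * τ' * ‖-b * conj' G + G * conj' (s - m)‖ * ‖G‖
        ≤ ‖k‖ * τ' * (‖G‖ * (‖b‖ + (‖s‖ + ‖m‖))) * ‖G‖ := by gcongr
      _ = ‖k‖ * (τ' * ‖G‖ ^ 2) * (‖b‖ + (‖s‖ + ‖m‖)) := by ring
      _ ≤ _ := by gcongr
  have hthird : ‖k * τ * -b‖ ≤ ‖k‖ * 1 * ‖b‖ := by
    rw [norm_mul, norm_mul, norm_neg, norm_real, Real.norm_of_nonneg hτ]
    gcongr
  refine (norm_add_le_of_le (norm_add_le_of_le hfirst hsecond) hthird).trans_eq ?_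
  ring

namespace IsHolomorphicWhereNe

section WeakDbar

variable {F φ k : ℂ → ℂ} {U : Set ℂ} (h : IsHolomorphicWhereNe F φ U)

include h

theorem tendsto_dbar_truncation_sub (hk : ContDiff ℝ 1 k) (hkU : tsupport k ⊆ U) (z : ℂ) :
    Tendsto (fun δ => dbar (truncation F φ k (fun z => F z - φ z) δ) z) (𝓝[>] 0)
      (𝓝 ({z ∈ U | F z ≠ φ z}.indicator
        (fun z => dbar k z * (F z - φ z) - k z * dbar φ z) z)) := by
  by_cases hz : z ∈ {z ∈ U | F z ≠ φ z}
  · rw [indicator_of_mem hz]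
    refine tendsto_const_nhds.congr' ?_
    filter_upwards [eventually_cutoff_eq_one (normSq_pos.2 (sub_ne_zero.2 hz.2))] with δ hδ
    have hkz := hasWirtingerDerivAt_dz_dbar (hk.differentiable one_ne_zero z)
    have hderiv : deriv (cutoff δ) (normSq (F z - φ z)) = 0 :=
      hδ.deriv_eq.trans (deriv_const _ _)
    rw [h.dbar_truncation hz hkz (h.hasWirtingerDerivAt_sub hz), hδ.self_of_nhds, hderiv]
    simp only [Pi.one_apply, ofReal_one, ofReal_zero]
    ring
  · rw [indicator_of_notMem hz]
    refine tendsto_const_nhds.congr' ?_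
    filter_upwards [self_mem_nhdsWithin] with δ hδ
    exact (h.dbar_truncation_eq_zero hkU hδ hz).symm

theorem norm_dbar_truncation_sub_le (hk : ContDiff ℝ 1 k) (hkU : tsupport k ⊆ U) {C δ : ℝ}
    (hδ : 0 < δ) (hC : ∀ t, deriv (cutoff δ) t * t ≤ C) (z : ℂ) :
    ‖dbar (truncation F φ k (fun z => F z - φ z) δ) z‖ ≤
      C * {z ∈ U | F z ≠ φ z}.indicator (fun z => ‖k z‖ * ‖deriv F z‖) z
        + (‖dbar k z‖ * ‖F z - φ z‖ + ‖k z‖ * ((C + 1) * ‖dbar φ z‖ + C * ‖dz φ z‖)) := by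
  have hC0 : 0 ≤ C := by simpa using hC 0
  by_cases hz : z ∈ {z ∈ U | F z ≠ φ z}
  · have hkz := hasWirtingerDerivAt_dz_dbar (hk.differentiable one_ne_zero z)
    rw [indicator_of_mem hz, h.dbar_truncation hz hkz (h.hasWirtingerDerivAt_sub hz)]
    exact norm_truncation_sub_le (cutoff_nonneg _ _) (cutoff_le_one _ _)
      (deriv_cutoff_nonneg hδ _) (by simpa [normSq_eq_norm_sq] using hC (normSq (F z - φ z)))
  · rw [h.dbar_truncation_eq_zero hkU hδ hz, norm_zero, indicator_of_notMem hz]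
    positivity

variable (hk : ContDiff ℝ 1 k) (hc : HasCompactSupport k) (hkU : tsupport k ⊆ U)

include hk hc hkU

theorem integrable_indicator_norm_deriv :
    Integrable ({z ∈ U | F z ≠ φ z}.indicator fun z => ‖k z‖ * ‖deriv F z‖) := by
  have hV := h.isOpen_ne.measurableSet
  have hone : Integrable ((tsupport k).indicator fun _ => (1 : ℝ)) :=
    (integrable_indicator_iff (isClosed_tsupport k).measurableSet).2
      (integrableOn_const hc.measure_lt_top.ne)
  have hmeas : AEStronglyMeasurable
      ({z ∈ U | F z ≠ φ z}.indicator fun z => ‖k z‖ * ‖deriv F z‖) volume :=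
    (aestronglyMeasurable_indicator_iff hV).2 (hk.continuous.norm.measurable.mul
      (measurable_deriv F).norm).aestronglyMeasurable
  refine (hone.add (h.integrable_indicator_sq_norm_deriv hk hc hkU)).mono' hmeas
    (.of_forall fun z => ?_)
  by_cases hz : z ∈ {z ∈ U | F z ≠ φ z}
  · by_cases hzk : z ∈ tsupport k
    · rw [Pi.add_apply, indicator_of_mem hz, indicator_of_mem hz, indicator_of_mem hzk,
        Real.norm_of_nonneg (by positivity)]
      nlinarith [sq_nonneg (‖k z‖ * ‖deriv F z‖ - 1)]
    · simp [hz, hzk, image_eq_zero_of_notMem_tsupport hzk]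
  · simpa [hz] using indicator_nonneg (fun _ _ => zero_le_one) z

theorem integrable_truncation_sub_bound (C : ℝ) :
    Integrable fun z => ‖dbar k z‖ * ‖F z - φ z‖
      + ‖k z‖ * ((C + 1) * ‖dbar φ z‖ + C * ‖dz φ z‖) := by
  refine integrable_of_continuousOn_isCompact hc (ContinuousOn.mono ?_ hkU) fun z hz => by
    simp [dbar_eq_zero_of_notMem_tsupport hz, image_eq_zero_of_notMem_tsupport hz]
  have hG := h.continuousOn_sub
  have hdbarφ := continuousOn_dbar h.isOpen h.contDiffOn
  have hdzφ := continuousOn_dz h.isOpen h.contDiffOn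
  have hdbark := continuous_dbar hk
  have hk' := hk.continuous
  fun_prop

theorem integral_indicator_dbar_mul_sub_eq_zero :
    ∫ z, {z ∈ U | F z ≠ φ z}.indicator (fun z => dbar k z * (F z - φ z) - k z * dbar φ z) z
      = 0 := by
  obtain ⟨C, hC⟩ := exists_deriv_cutoff_mul_le
  have hsmooth (δ : ℝ) (hδ : 0 < δ) :
      ContDiff ℝ 1 (truncation F φ k (fun z => F z - φ z) δ) :=
    h.contDiff_truncation hkU hδ hk fun _ hz => h.contDiffAt_sub hz
  refine tendsto_nhds_unique (tendsto_integral_filter_of_dominated_convergence _ ?_ ?_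
    (((h.integrable_indicator_norm_deriv hk hc hkU).const_mul C).add
      (h.integrable_truncation_sub_bound hk hc hkU C))
    (.of_forall (h.tendsto_dbar_truncation_sub hk hkU)))
    (tendsto_const_nhds.congr' ?_)
  · filter_upwards [self_mem_nhdsWithin] with δ hδ
    exact (continuous_dbar (hsmooth δ hδ)).aestronglyMeasurable
  · filter_upwards [self_mem_nhdsWithin] with δ hδ
    exact .of_forall (h.norm_dbar_truncation_sub_le hk hkU hδ (hC δ · hδ))
  · filter_upwards [self_mem_nhdsWithin] with δ hδ
    exact (integral_dbar_eq_zero (hsmooth δ hδ) hc.mul_right.mul_right).symm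

omit hk hc hkU

theorem indicator_dbar_mul_sub_eq (hk : ContDiff ℝ 1 k) (hkU : tsupport k ⊆ U) (z : ℂ) :
    {z ∈ U | F z ≠ φ z}.indicator (fun z => dbar k z * (F z - φ z) - k z * dbar φ z) z =
      F z * dbar k z + {z | F z = φ z}.indicator (dbar φ) z * k z
        - dbar (fun z => φ z * k z) z := by
  by_cases hzU : z ∈ U
  · have hφz := hasWirtingerDerivAt_dz_dbar
      ((h.contDiffOn.contDiffAt (h.isOpen.mem_nhds hzU)).differentiableAt one_ne_zero)
    have hkz := hasWirtingerDerivAt_dz_dbar (hk.differentiable one_ne_zero z)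
    rw [(hφz.mul hkz).dbar_eq]
    by_cases hz : F z = φ z
    · simp only [ne_eq, mem_ofPred_eq, hz, not_true_eq_false, and_false, not_false_eq_true,
        indicator_of_notMem, indicator_of_mem]
      ring
    · simp only [ne_eq, mem_ofPred_eq, hzU, hz, not_false_eq_true, and_self, indicator_of_mem,
        indicator_of_notMem, zero_mul, add_zero]
      ring
  · have hzk : z ∉ tsupport k := fun hzk => hzU (hkU hzk)
    simp [hzU, dbar_eq_zero_of_notMem_tsupport hzk, image_eq_zero_of_notMem_tsupport hzk,
      dbar_eq_zero_of_notMem_tsupport fun hz => hzk (tsupport_mul_subset_right hz)]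

theorem integrable_indicator_dbar_mul (hk : ContDiff ℝ 1 k) (hc : HasCompactSupport k)
    (hkU : tsupport k ⊆ U) : Integrable fun z => {z | F z = φ z}.indicator (dbar φ) z * k z := by
  have hφ' : Integrable fun z => dbar φ z * k z := by
    refine integrable_of_continuousOn_isCompact hc
      (((continuousOn_dbar h.isOpen h.contDiffOn).mul hk.continuous.continuousOn).mono hkU)
      fun z hz => by simp [image_eq_zero_of_notMem_tsupport hz]
  refine (hφ'.indicator h.isOpen_ne.measurableSet.compl).congr (.of_forall fun z => ?_)
  by_cases hzU : z ∈ U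
  · by_cases hz : F z = φ z <;> simp [hz, hzU]
  · simp [hzU, image_eq_zero_of_notMem_tsupport fun hzk => hzU (hkU hzk)]

theorem hasWeakDbarOn : HasWeakDbarOn U F ({z | F z = φ z}.indicator (dbar φ)) := by
  intro k hk hc hkU
  have hφk : ContDiff ℝ 1 fun z => φ z * k z := contDiff_mul_of_tsupport_subset h.isOpen
    h.contDiffOn hk hkU
  have hφkc : HasCompactSupport fun z => φ z * k z := hc.mul_left
  have hF : Integrable fun z => F z * dbar k z :=
    integrable_of_continuousOn_isCompact hc
      ((h.continuousOn.mono hkU).mul (continuous_dbar hk).continuousOn)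
      fun z hz => by simp [dbar_eq_zero_of_notMem_tsupport hz]
  have hE := h.integrable_indicator_dbar_mul hk hc hkU
  have hFE : Integrable fun z =>
      F z * dbar k z + {z | F z = φ z}.indicator (dbar φ) z * k z := hF.add hE
  have hzero := h.integral_indicator_dbar_mul_sub_eq_zero hk hc hkU
  simp only [h.indicator_dbar_mul_sub_eq hk hkU] at hzero
  rw [integral_sub hFE (integrable_dbar hφk hφkc), integral_add hF hE,
    integral_dbar_eq_zero hφk hφkc, sub_zero] at hzero
  exact eq_neg_of_add_eq_zero_left hzero

end WeakDbar

end IsHolomorphicWhereNe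

section CauchyTransform

theorem continuous_integral_mul_comp_sub {μ h : ℂ → ℂ} {M : ℝ} (hμ : Measurable μ)
    (hM : ∀ z, ‖μ z‖ ≤ M) (hh : Integrable h) : Continuous fun z => ∫ ζ, μ ζ * h (ζ - z) := by
  have hM0 : 0 ≤ M := (norm_nonneg _).trans (hM 0)
  have hint {g : ℂ → ℂ} (hg : Integrable g) (z : ℂ) : Integrable fun ζ => μ ζ * g (ζ - z) :=
    (hg.comp_sub_right z).bdd_mul hμ.aestronglyMeasurable (.of_forall hM)
  refine continuous_of_uniform_approx_of_continuous fun u hu => ?_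
  obtain ⟨ε, hε, hεu⟩ := Metric.mem_uniformity_dist.1 hu
  obtain ⟨g, hgc, hg, hgcont, hgint⟩ :=
    hh.exists_hasCompactSupport_integral_sub_le (ε := ε / (M + 1)) (by positivity)
  refine ⟨fun z => ∫ ζ, μ ζ * g (ζ - z), ?_, fun z => hεu ?_⟩
  · have hμloc : LocallyIntegrable μ :=
      (memLp_top_of_bound hμ.aestronglyMeasurable M (.of_forall hM)).locallyIntegrable le_top
    have hconv := (hgc.comp_homeomorph (Homeomorph.neg ℂ)).continuous_convolution_right
      (ContinuousLinearMap.mul ℝ ℂ) hμloc (hgcont.comp continuous_neg)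
    refine hconv.congr fun z => ?_
    simp [convolution_def]
  · rw [dist_eq_norm, ← integral_sub (hint hh z) (hint hgint z)]
    calc ‖∫ ζ, (μ ζ * h (ζ - z) - μ ζ * g (ζ - z))‖
        ≤ ∫ ζ, M * ‖h (ζ - z) - g (ζ - z)‖ := by
          refine norm_integral_le_of_norm_le
            (((hh.sub hgint).norm.comp_sub_right z).const_mul M) (.of_forall fun ζ => ?_)
          rw [← mul_sub, norm_mul]
          gcongr
          exact hM ζ
      _ = M * ∫ ζ, ‖h ζ - g ζ‖ := by
          rw [integral_const_mul, integral_sub_right_eq_self fun ζ => ‖h ζ - g ζ‖]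
      _ ≤ M * (ε / (M + 1)) := by gcongr
      _ < ε := by
          rw [mul_div_assoc', div_lt_iff₀ (by positivity)]
          nlinarith

theorem integrable_indicator_ball_inv (R : ℝ) :
    Integrable ((ball (0 : ℂ) R).indicator fun w => w⁻¹) := by
  refine (integrable_indicator_iff measurableSet_ball).2
    (integrableOn_ball_of_norm_le_rpow (C := 1) (α := 1) (by simp) (by simp) ?_
      measurable_inv.aestronglyMeasurable)
  exact .of_forall fun w => by rw [norm_inv, Real.rpow_neg_one, one_mul]

/-- The (unnormalised) Cauchy transform `z ↦ ∫ μ(ζ) / (ζ - z) dA(ζ)` of a density `μ` with respect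
to the area measure. -/
noncomputable def cauchyTransform (μ : ℂ → ℂ) (z : ℂ) : ℂ := ∫ ζ, μ ζ / (ζ - z)

variable {μ : ℂ → ℂ} {M R : ℝ} (hμ : Measurable μ) (hM : ∀ z, ‖μ z‖ ≤ M)
  (hR : ∀ z ∉ ball (0 : ℂ) R, μ z = 0)

include hR in
theorem div_sub_eq_mul_indicator {R' : ℝ} {z : ℂ} (hz : R + ‖z‖ ≤ R') (ζ : ℂ) :
    μ ζ / (ζ - z) = μ ζ * (ball (0 : ℂ) R').indicator (fun w => w⁻¹) (ζ - z) := by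
  by_cases hζ : ζ ∈ ball (0 : ℂ) R
  · have hmem : ζ - z ∈ ball (0 : ℂ) R' := by
      rw [mem_ball_zero_iff] at hζ ⊢
      exact (norm_sub_le _ _).trans_lt (by linarith)
    rw [indicator_of_mem hmem, div_eq_mul_inv]
  · rw [hR ζ hζ, zero_div, zero_mul]

include hμ hM hR

theorem integrable_div_sub (z : ℂ) : Integrable fun ζ => μ ζ / (ζ - z) := by
  simp only [div_sub_eq_mul_indicator hR le_rfl]
  exact ((integrable_indicator_ball_inv _).comp_sub_right z).bdd_mul hμ.aestronglyMeasurable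
    (.of_forall hM)

theorem continuous_cauchyTransform : Continuous (cauchyTransform μ) := by
  refine continuous_iff_continuousAt.2 fun z₀ => ?_
  refine (continuous_integral_mul_comp_sub hμ hM (integrable_indicator_ball_inv
    (R + (‖z₀‖ + 1)))).continuousAt.congr ?_
  filter_upwards [continuous_norm.continuousAt.eventually_lt_const (lt_add_one ‖z₀‖)] with z hz
  exact integral_congr_ae (.of_forall fun ζ =>
    (div_sub_eq_mul_indicator hR (by gcongr) ζ).symm)

end CauchyTransform

section CauchyPompeiu

theorem integral_inv_sq_one_add_normSq : ∫ w : ℂ, ((1 + normSq w) ^ 2)⁻¹ = Real.pi := by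
  have hderiv (t : ℝ) :
      HasDerivAt (fun t : ℝ => -(2 * (1 + t ^ 2))⁻¹) (t * ((1 + t ^ 2) ^ 2)⁻¹) t := by
    refine ((((hasDerivAt_pow 2 t).const_add 1).const_mul 2).fun_inv
      (by positivity)).fun_neg.congr_deriv ?_
    have : 1 + t ^ 2 ≠ 0 := by positivity
    field_simp
    push_cast
    ring
  have hlim : Tendsto (fun t : ℝ => -(2 * (1 + t ^ 2))⁻¹) atTop (𝓝 0) := by
    have hden := (tendsto_atTop_add_const_left _ (1 : ℝ)
      (tendsto_pow_atTop two_ne_zero)).const_mul_atTop (two_pos (α := ℝ))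
    simpa using hden.inv_tendsto_atTop.neg
  have hradial : ∫ t in Ioi (0 : ℝ), t * ((1 + t ^ 2) ^ 2)⁻¹ = 1 / 2 := by
    rw [integral_Ioi_of_hasDerivAt_of_nonneg' (fun t _ => hderiv t)
      (fun t ht => mul_nonneg (le_of_lt ht) (by positivity)) hlim]
    norm_num
  simp only [normSq_eq_norm_sq]
  rw [integral_fun_norm_addHaar volume fun t : ℝ => ((1 + t ^ 2) ^ 2)⁻¹]
  simp only [finrank_real_complex, Measure.real, volume_ball, smul_eq_mul, Nat.add_one_sub_one,
    pow_one, hradial, ENNReal.ofReal_one, one_pow, one_mul, ENNReal.coe_toReal, NNReal.coe_real_pi,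
    nsmul_eq_mul, Nat.cast_ofNat]
  ring

/-- The regularisation `w̄ / (|w|² + ε)` of the Cauchy kernel `1 / w`. -/
noncomputable def regCauchyKernel (ε : ℝ) (w : ℂ) : ℂ := conj' w * ((normSq w + ε)⁻¹ : ℝ)

variable {ε : ℝ}

theorem contDiff_regCauchyKernel (hε : 0 < ε) : ContDiff ℝ 1 (regCauchyKernel ε) := by
  have hinv : ContDiff ℝ 1 fun w : ℂ => (normSq w + ε)⁻¹ := by
    simp only [normSq_eq_norm_sq]
    exact ((contDiff_norm_sq ℝ).add contDiff_const).inv fun w => by positivity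
  exact conjCLE.contDiff.mul (ofRealCLM.contDiff.comp hinv)

theorem dbar_regCauchyKernel_sub (hε : 0 < ε) (z ζ : ℂ) :
    dbar (fun ζ => regCauchyKernel ε (ζ - z)) ζ = (ε / (normSq (ζ - z) + ε) ^ 2 : ℝ) := by
  have hpos : normSq (ζ - z) + ε ≠ 0 := (add_pos_of_nonneg_of_pos (normSq_nonneg _) hε).ne'
  have hsub : HasWirtingerDerivAt (fun ζ : ℂ => ζ - z) 1 0 ζ :=
    .of_hasDerivAt ((hasDerivAt_id ζ).sub_const z)
  have hinv : HasDerivAt (fun t : ℝ => (t + ε)⁻¹) (-1 / (normSq (ζ - z) + ε) ^ 2)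
      (normSq (ζ - z)) := ((hasDerivAt_id _).add_const ε).fun_inv hpos
  refine (hsub.conj.mul (hsub.comp_normSq hinv)).dbar_eq.trans ?_
  have hpos' : (normSq (ζ - z) + ε : ℂ) ≠ 0 := mod_cast hpos
  have hmul := mul_conj (ζ - z)
  push_cast
  simp only [map_one]
  field_simp
  linear_combination -hmul

theorem norm_regCauchyKernel_le (hε : 0 < ε) (w : ℂ) : ‖regCauchyKernel ε w‖ ≤ ‖w⁻¹‖ := by
  rw [inv_def, regCauchyKernel, norm_mul, norm_mul, norm_real, norm_real]
  rcases eq_or_ne w 0 with rfl | hw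
  · simp
  have hw' : 0 < normSq w := normSq_pos.2 hw
  rw [Real.norm_of_nonneg (by positivity), Real.norm_of_nonneg (by positivity)]
  gcongr
  linarith

theorem tendsto_regCauchyKernel (w : ℂ) :
    Tendsto (fun c : ℝ => regCauchyKernel (c ^ 2)⁻¹ w) atTop (𝓝 w⁻¹) := by
  rcases eq_or_ne w 0 with rfl | hw
  · simp [regCauchyKernel]
  have hinv : Tendsto (fun c : ℝ => (normSq w + (c ^ 2)⁻¹)⁻¹) atTop (𝓝 (normSq w + 0)⁻¹) :=
    ((tendsto_pow_atTop two_ne_zero).inv_tendsto_atTop.const_add _).inv₀ (by simpa using hw)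
  rw [add_zero] at hinv
  rw [inv_def]
  exact ((continuous_ofReal.tendsto _).comp hinv).const_mul _

theorem tendsto_sq_norm_mul_inv_sq_one_add_normSq :
    Tendsto (fun w : ℂ => ‖w‖ ^ 2 * ((1 + normSq w) ^ 2)⁻¹) (Bornology.cobounded ℂ) (𝓝 0) := by
  have hmajorant : Tendsto (fun t : ℝ => (t ^ 2)⁻¹) atTop (𝓝 0) :=
    (tendsto_pow_atTop two_ne_zero).inv_tendsto_atTop
  refine squeeze_zero' (.of_forall fun w => by positivity) ?_
    (hmajorant.comp tendsto_norm_cobounded_atTop)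
  filter_upwards [Bornology.eventually_ne_cobounded 0] with w hw
  have hw' : 0 < ‖w‖ := norm_pos_iff.2 hw
  rw [normSq_eq_norm_sq, Function.comp_apply, ← div_eq_mul_inv, div_le_iff₀ (by positivity),
    inv_mul_eq_div, le_div_iff₀ (by positivity)]
  nlinarith [sq_nonneg ‖w‖]

theorem dbar_regCauchyKernel_inv_sq_sub {c : ℝ} (hc : 0 < c) (z ζ : ℂ) :
    dbar (fun ζ => regCauchyKernel (c ^ 2)⁻¹ (ζ - z)) ζ =
      (c ^ 2 * ((1 + normSq (c • (z - ζ))) ^ 2)⁻¹ : ℝ) := by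
  rw [dbar_regCauchyKernel_sub (by positivity), ofReal_inj, real_smul, normSq_mul, normSq_ofReal,
    ← neg_sub ζ z, normSq_neg, normSq_eq_norm_sq]
  have : 0 < 1 + c ^ 2 * ‖ζ - z‖ ^ 2 := by positivity
  field_simp
  ring

theorem tendsto_integral_mul_dbar_regCauchyKernel {G : ℂ → ℂ} {z : ℂ} (hG : Integrable G)
    (hGz : ContinuousAt G z) :
    Tendsto (fun c : ℝ => ∫ ζ, G ζ * dbar (fun ζ => regCauchyKernel (c ^ 2)⁻¹ (ζ - z)) ζ) atTop
      (𝓝 (Real.pi * G z)) := by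
  have hmass : ∫ w : ℂ, Real.pi⁻¹ * ((1 + normSq w) ^ 2)⁻¹ = 1 := by
    rw [integral_const_mul, integral_inv_sq_one_add_normSq, inv_mul_cancel₀ Real.pi_ne_zero]
  have hdecay : Tendsto (fun w : ℂ => ‖w‖ ^ Module.finrank ℝ ℂ *
      (Real.pi⁻¹ * ((1 + normSq w) ^ 2)⁻¹)) (Bornology.cobounded ℂ) (𝓝 0) := by
    simpa only [finrank_real_complex, mul_left_comm, mul_zero] using
      tendsto_sq_norm_mul_inv_sq_one_add_normSq.const_mul Real.pi⁻¹
  have hlim := (tendsto_integral_comp_smul_smul_of_integrable' (μ := volume) (x₀ := z)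
    (fun w => by positivity) hmass hdecay hG hGz).const_mul (Real.pi : ℂ)
  refine hlim.congr' ?_
  filter_upwards [eventually_gt_atTop 0] with c hc
  rw [← integral_const_mul]
  refine integral_congr_ae (.of_forall fun ζ => ?_)
  have hpi : (Real.pi : ℂ) ≠ 0 := mod_cast Real.pi_ne_zero
  simp only [dbar_regCauchyKernel_inv_sq_sub hc, finrank_real_complex, real_smul]
  push_cast
  field_simp

theorem pi_mul_eq_neg_cauchyTransform {G N : ℂ → ℂ} {M R : ℝ} {z : ℂ} (hG : Integrable G)
    (hGz : ContinuousAt G z) (hN : Measurable N) (hM : ∀ z, ‖N z‖ ≤ M)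
    (hR : ∀ z ∉ ball (0 : ℂ) R, N z = 0)
    (hGN : ∀ k : ℂ → ℂ, ContDiff ℝ 1 k → ∫ ζ, G ζ * dbar k ζ = -∫ ζ, N ζ * k ζ) :
    Real.pi * G z = -cauchyTransform N z := by
  have hK {ε : ℝ} (hε : 0 < ε) : ContDiff ℝ 1 fun ζ => regCauchyKernel ε (ζ - z) :=
    (contDiff_regCauchyKernel hε).comp (contDiff_id.sub contDiff_const)
  have hpos : ∀ᶠ c : ℝ in atTop, 0 < (c ^ 2)⁻¹ := by
    filter_upwards [eventually_gt_atTop 0] with c hc using by positivity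
  have hlim : Tendsto (fun c : ℝ => ∫ ζ, N ζ * regCauchyKernel (c ^ 2)⁻¹ (ζ - z)) atTop
      (𝓝 (cauchyTransform N z)) := by
    refine tendsto_integral_filter_of_dominated_convergence (fun ζ => ‖N ζ / (ζ - z)‖) ?_ ?_
      (integrable_div_sub hN hM hR z).norm (.of_forall fun ζ => ?_)
    · filter_upwards [hpos] with c hc
      exact (hN.mul (hK hc).continuous.measurable).aestronglyMeasurable
    · filter_upwards [hpos] with c hc
      refine .of_forall fun ζ => ?_
      rw [div_eq_mul_inv, norm_mul, norm_mul]
      gcongr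
      exact norm_regCauchyKernel_le hc _
    · rw [div_eq_mul_inv]
      exact (tendsto_regCauchyKernel _).const_mul _
  refine tendsto_nhds_unique (tendsto_integral_mul_dbar_regCauchyKernel hG hGz)
    (hlim.neg.congr' ?_)
  filter_upwards [hpos] with c hc using (hGN _ (hK hc)).symm

end CauchyPompeiu

section Expansion

theorem continuous_mul_of_tsupport_subset {F k : ℂ → ℂ} {U : Set ℂ} (hU : IsOpen U)
    (hF : ContinuousOn F U) (hk : Continuous k) (hkU : tsupport k ⊆ U) :
    Continuous fun z => F z * k z :=
  continuous_of_tsupport fun _ hz =>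
    (hF.continuousAt (hU.mem_nhds (hkU (tsupport_mul_subset_right hz)))).mul hk.continuousAt

theorem tsupport_dbar_subset (f : ℂ → ℂ) : tsupport (dbar f) ⊆ tsupport f :=
  closure_minimal (fun _ hz => by_contra fun h => hz (dbar_eq_zero_of_notMem_tsupport h))
    (isClosed_tsupport f)

theorem HasWeakDbarOn.integral_mul_dbar_eq {F f χ k : ℂ → ℂ} {U : Set ℂ} (hU : IsOpen U)
    (hF : ContinuousOn F U) (hf : LocallyIntegrable f) (h : HasWeakDbarOn U F f)
    (hχ : ContDiff ℝ 1 χ) (hχc : HasCompactSupport χ) (hχU : tsupport χ ⊆ U)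
    (hk : ContDiff ℝ 1 k) :
    ∫ z, F z * χ z * dbar k z = -∫ z, (F z * dbar χ z + f z * χ z) * k z := by
  have hFχ : Continuous fun z => F z * χ z :=
    continuous_mul_of_tsupport_subset hU hF hχ.continuous hχU
  have hFdχ : Continuous fun z => F z * dbar χ z :=
    continuous_mul_of_tsupport_subset hU hF (continuous_dbar hχ)
      ((tsupport_dbar_subset χ).trans hχU)
  have hdχc : HasCompactSupport (dbar χ) := hχc.mono' fun _ hz =>
    tsupport_dbar_subset χ (subset_tsupport _ hz)
  have int₁ : Integrable fun z => F z * χ z * dbar k z :=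
    (hFχ.mul (continuous_dbar hk)).integrable_of_hasCompactSupport hχc.mul_left.mul_right
  have int₂ : Integrable fun z => F z * dbar χ z * k z :=
    (hFdχ.mul hk.continuous).integrable_of_hasCompactSupport hdχc.mul_left.mul_right
  have int₃ : Integrable fun z => f z * (χ z * k z) := by
    simpa only [smul_eq_mul, mul_comm] using
      hf.integrable_smul_left_of_hasCompactSupport (hχ.mul hk).continuous hχc.mul_right
  have hleibniz (z : ℂ) : dbar (fun z => χ z * k z) z = dbar χ z * k z + χ z * dbar k z :=
    ((hasWirtingerDerivAt_dz_dbar (hχ.differentiable one_ne_zero z)).mul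
      (hasWirtingerDerivAt_dz_dbar (hk.differentiable one_ne_zero z))).dbar_eq
  have htest := h _ (hχ.mul hk) hχc.mul_right (tsupport_mul_subset_left.trans hχU)
  have hsum₁ : ∫ z, F z * dbar (fun z => χ z * k z) z =
      (∫ z, F z * χ z * dbar k z) + ∫ z, F z * dbar χ z * k z := by
    rw [← integral_add int₁ int₂]
    exact integral_congr_ae (.of_forall fun z => by simp only [hleibniz]; ring)
  have hsum₂ : ∫ z, (F z * dbar χ z + f z * χ z) * k z =
      (∫ z, F z * dbar χ z * k z) + ∫ z, f z * (χ z * k z) := by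
    rw [← integral_add int₂ int₃]
    exact integral_congr_ae (.of_forall fun z => by ring)
  linear_combination htest - hsum₁ + hsum₂

theorem locallyIntegrable_pow_mul {μ : ℂ → ℂ} {M : ℝ} (hμ : Measurable μ) (hM : ∀ z, ‖μ z‖ ≤ M)
    (n : ℕ) : LocallyIntegrable fun ζ => ζ ^ n * μ ζ := by
  have hμloc : LocallyIntegrable μ :=
    (memLp_top_of_bound hμ.aestronglyMeasurable M (.of_forall hM)).locallyIntegrable le_top
  rw [← locallyIntegrableOn_univ] at hμloc ⊢
  exact hμloc.continuousOn_mul (continuous_pow n).continuousOn isOpen_univ.isLocallyClosed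

theorem norm_pow_mul_le_of_eq_zero_of_notMem_ball {μ : ℂ → ℂ} {M R : ℝ} (hM : ∀ z, ‖μ z‖ ≤ M)
    (hR : ∀ z ∉ ball (0 : ℂ) R, μ z = 0) (n : ℕ) (z : ℂ) : ‖z ^ n * μ z‖ ≤ |R| ^ n * M := by
  have hM0 : 0 ≤ M := (norm_nonneg _).trans (hM 0)
  by_cases hz : z ∈ ball (0 : ℂ) R
  · rw [norm_mul, norm_pow]
    have hzR : ‖z‖ ≤ |R| := (mem_ball_zero_iff.1 hz).le.trans (le_abs_self R)
    gcongr
    exact hM z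
  · rw [hR z hz, mul_zero, norm_zero]
    positivity

theorem exists_polynomial_cauchyTransform_pow_mul {μ : ℂ → ℂ} {M R : ℝ} (hμ : Measurable μ)
    (hM : ∀ z, ‖μ z‖ ≤ M) (hR : ∀ z ∉ ball (0 : ℂ) R, μ z = 0) (n : ℕ) :
    ∃ p : Polynomial ℂ, p.degree < n ∧ ∀ w,
      cauchyTransform (fun ζ => ζ ^ n * μ ζ) w = p.eval w + w ^ n * cauchyTransform μ w := by
  have hmoment (j : ℕ) : Integrable fun ζ => ζ ^ j * μ ζ := by
    refine (integrableOn_iff_integrable_of_support_subset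
      (Function.support_subset_iff'.2 fun ζ hζ => ?_)).1
      ((locallyIntegrable_pow_mul hμ hM j).integrableOn_isCompact (isCompact_closedBall 0 R))
    rw [hR ζ fun hζ' => hζ (ball_subset_closedBall hζ'), mul_zero]
  refine ⟨∑ i ∈ Finset.range n, Polynomial.monomial i (∫ ζ, ζ ^ (n - 1 - i) * μ ζ), ?_, fun w => ?_⟩
  · refine Polynomial.mem_degreeLT.1 (Submodule.sum_mem _ fun i hi => ?_)
    exact Polynomial.mem_degreeLT.2 ((Polynomial.degree_monomial_le _ _).trans_lt
      (mod_cast Finset.mem_range.1 hi))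
  have hsum (i : ℕ) : Integrable fun ζ => ζ ^ (n - 1 - i) * μ ζ * w ^ i :=
    (hmoment _).mul_const _
  simp only [Polynomial.eval_finsetSum, Polynomial.eval_monomial, cauchyTransform,
    ← integral_mul_const, ← integral_const_mul]
  rw [← integral_finsetSum _ fun i _ => hsum i, ← integral_add
    (integrable_finsetSum _ fun i _ => hsum i) ((integrable_div_sub hμ hM hR w).const_mul _)]
  refine integral_congr_ae ?_
  filter_upwards [Measure.ae_ne volume w] with ζ hζ
  have hgeom : ∑ i ∈ Finset.range n, ζ ^ (n - 1 - i) * μ ζ * w ^ i =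
      (∑ i ∈ Finset.range n, w ^ i * ζ ^ (n - 1 - i)) * μ ζ := by
    rw [Finset.sum_mul]
    exact Finset.sum_congr rfl fun i _ => by ring
  have hζ' : ζ - w ≠ 0 := sub_ne_zero.2 hζ
  rw [hgeom]
  field_simp
  linear_combination μ ζ * geom_sum₂_mul w ζ n

theorem exists_contDiff_hasCompactSupport_eventuallyEq_one {U : Set ℂ} {z : ℂ} (hU : U ∈ 𝓝 z) :
    ∃ χ : ℂ → ℂ, ContDiff ℝ 1 χ ∧ HasCompactSupport χ ∧ tsupport χ ⊆ U ∧ χ =ᶠ[𝓝 z] 1 := by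
  obtain ⟨ρ, hρ, hρU⟩ := nhds_basis_closedBall.mem_iff.1 hU
  let χ : ContDiffBump z := ⟨ρ / 2, ρ, half_pos hρ, half_lt_self hρ⟩
  have hsupp : tsupport (fun w => (χ w : ℂ)) ⊆ tsupport χ :=
    closure_mono fun w hw h => hw (by simp only [h, ofReal_zero])
  refine ⟨fun w => χ w, ofRealCLM.contDiff.comp χ.contDiff, χ.hasCompactSupport.mono' ?_,
    hsupp.trans (χ.tsupport_eq.trans_subset hρU), ?_⟩
  · exact (subset_tsupport _).trans hsupp
  · filter_upwards [χ.eventuallyEq_one] with w hw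
    simp [hw]

theorem continuous_dbar_div_pow {χ : ℂ → ℂ} (hχ : ContDiff ℝ 1 χ) (hχ1 : χ =ᶠ[𝓝 0] 1) (n : ℕ) :
    Continuous fun z => dbar χ z / z ^ n := by
  refine continuous_iff_continuousAt.2 fun z => ?_
  rcases eq_or_ne z 0 with rfl | hz
  · refine continuousAt_const.congr (f := fun _ => 0) ?_
    filter_upwards [hχ1.eventuallyEq_nhds] with w hw
    rw [dbar_congr (g := fun _ => 1) hw, dbar_const, zero_div]
  · exact (continuous_dbar hχ).continuousAt.div (continuousAt_id.pow n) (pow_ne_zero n hz)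

-- `∂̄χ` vanishes near `0`, so the term `F ∂̄χ` may be divided by `zⁿ`.
theorem exists_measurable_pow_mul_eq {F g χ : ℂ → ℂ} {U : Set ℂ} {M : ℝ} (hU : IsOpen U)
    (hF : ContinuousOn F U) (hg : Measurable g) (hgM : ∀ z, ‖g z‖ ≤ M) (hχ : ContDiff ℝ 1 χ)
    (hχc : HasCompactSupport χ) (hχU : tsupport χ ⊆ U) (hχ1 : χ =ᶠ[𝓝 0] 1) (n : ℕ) :
    ∃ (μ : ℂ → ℂ) (C R : ℝ), Measurable μ ∧ (∀ z, ‖μ z‖ ≤ C) ∧ (∀ z ∉ ball (0 : ℂ) R, μ z = 0) ∧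
      ∀ z, F z * dbar χ z + z ^ n * g z * χ z = z ^ n * μ z := by
  let κ : ℂ → ℂ := fun z => dbar χ z / z ^ n
  have hκχ : tsupport κ ⊆ tsupport χ := by
    simp only [κ, div_eq_mul_inv]
    exact tsupport_mul_subset_left.trans (tsupport_dbar_subset χ)
  have hFκ : Continuous fun z => F z * κ z := continuous_mul_of_tsupport_subset hU hF
    (continuous_dbar_div_pow hχ hχ1 n) (hκχ.trans hχU)
  have hFκc : HasCompactSupport fun z => F z * κ z :=
    (hχc.mono' ((subset_tsupport κ).trans hκχ)).mul_left
  obtain ⟨C₁, hC₁⟩ := hFκc.exists_bound_of_continuous hFκ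
  obtain ⟨C₂, hC₂⟩ := hχc.exists_bound_of_continuous hχ.continuous
  obtain ⟨R, hR⟩ := hχc.isBounded.subset_ball 0
  refine ⟨fun z => F z * κ z + g z * χ z, C₁ + M * C₂, R,
    hFκ.measurable.add (hg.mul hχ.continuous.measurable), fun z => ?_, fun z hz => ?_, fun z => ?_⟩
  · refine (norm_add_le _ _).trans (add_le_add (hC₁ z) ?_)
    rw [norm_mul]
    exact mul_le_mul (hgM z) (hC₂ z) (norm_nonneg _) ((norm_nonneg _).trans (hgM z))
  · have hzχ : z ∉ tsupport χ := fun h => hz (hR h)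
    simp only [image_eq_zero_of_notMem_tsupport hzχ,
      image_eq_zero_of_notMem_tsupport fun h => hzχ (hκχ h), mul_zero, add_zero]
  · rcases eq_or_ne z 0 with rfl | hz
    · have hdχ : dbar χ 0 = 0 := (dbar_congr (g := fun _ => 1) hχ1).trans (dbar_const 1 0)
      simp only [κ, hdχ, mul_zero, zero_div, zero_add, mul_assoc]
    · simp only [κ]
      field_simp

theorem HasWeakDbarOn.exists_polynomial_eventually_eq {F g : ℂ → ℂ} {U : Set ℂ} {M : ℝ} {n : ℕ}
    (hU : IsOpen U) (h0 : 0 ∈ U) (hF : ContinuousOn F U) (hg : Measurable g)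
    (hgM : ∀ z, ‖g z‖ ≤ M) (h : HasWeakDbarOn U F fun z => z ^ n * g z) :
    ∃ (p : Polynomial ℂ) (B : ℂ → ℂ), p.degree < n ∧ ContinuousAt B 0 ∧
      ∀ᶠ w in 𝓝 0, F w = p.eval w + w ^ n * B w := by
  obtain ⟨χ, hχ, hχc, hχU, hχ1⟩ :=
    exists_contDiff_hasCompactSupport_eventuallyEq_one (hU.mem_nhds h0)
  obtain ⟨μ, C, R, hμ, hC, hR, hμN⟩ :=
    exists_measurable_pow_mul_eq hU hF hg hgM hχ hχc hχU hχ1 n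
  obtain ⟨p, hp, hpμ⟩ := exists_polynomial_cauchyTransform_pow_mul hμ hC hR n
  have hG : Continuous fun z => F z * χ z :=
    continuous_mul_of_tsupport_subset hU hF hχ.continuous hχU
  have hpompeiu (w : ℂ) : Real.pi * (F w * χ w) = -cauchyTransform (fun z => z ^ n * μ z) w := by
    refine pi_mul_eq_neg_cauchyTransform (hG.integrable_of_hasCompactSupport hχc.mul_left)
      hG.continuousAt ((measurable_id.pow_const n).mul hμ)
      (norm_pow_mul_le_of_eq_zero_of_notMem_ball hC hR n)
      (fun z hz => by rw [hR z hz, mul_zero]) fun k hk => ?_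
    simpa only [hμN] using
      h.integral_mul_dbar_eq hU hF (locallyIntegrable_pow_mul hg hgM n) hχ hχc hχU hk
  have hpi : (Real.pi : ℂ) ≠ 0 := mod_cast Real.pi_ne_zero
  refine ⟨(-(Real.pi : ℂ)⁻¹) • p, fun w => -(Real.pi : ℂ)⁻¹ * cauchyTransform μ w,
    (Polynomial.degree_smul_le _ p).trans_lt hp,
    ((continuous_cauchyTransform hμ hC hR).const_mul _).continuousAt, ?_⟩
  filter_upwards [hχ1] with w hw
  have hFw := hpompeiu w
  rw [hw, Pi.one_apply, mul_one, hpμ] at hFw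
  rw [Polynomial.eval_smul, smul_eq_mul]
  field_simp
  linear_combination hFw

end Expansion

section Extension

open Polynomial

variable {l : Filter ℂ} [l.NeBot] {p : ℂ[X]} {n : ℕ} {b : ℂ}

theorem eq_zero_of_tendsto_eval_div_pow (hl : l ≤ 𝓝[≠] 0) (hp : p.degree < n)
    (h : Tendsto (fun z => p.eval z / z ^ n) l (𝓝 b)) : p = 0 := by
  by_contra hp0
  obtain ⟨q, hq, hq0⟩ := p.exists_eq_pow_rootMultiplicity_mul_and_not_dvd hp0 0
  set m := p.rootMultiplicity 0
  rw [C_0, sub_zero] at hq hq0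
  have hmn : m < n := by
    have hdeg : ((X : ℂ[X]) ^ m).degree ≤ p.degree :=
      degree_le_of_dvd ⟨q, hq⟩ hp0
    rw [degree_X_pow] at hdeg
    exact_mod_cast hdeg.trans_lt hp
  have hl0 : Tendsto id l (𝓝 (0 : ℂ)) := hl.trans nhdsWithin_le_nhds
  have hq_zero : Tendsto q.eval l (𝓝 0) := by
    have hprod := (hl0.pow (n - m)).mul h
    rw [zero_pow (Nat.sub_ne_zero_of_lt hmn), zero_mul] at hprod
    refine hprod.congr' ?_
    filter_upwards [hl self_mem_nhdsWithin] with z hz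
    have hz' : z ≠ 0 := hz
    rw [hq, eval_mul, eval_pow, eval_X, id, ← mul_div_assoc, ← mul_assoc, ← pow_add,
      Nat.sub_add_cancel hmn.le, mul_div_cancel_left₀ _ (pow_ne_zero n hz')]
  exact hq0 (X_dvd_iff.2 (coeff_zero_eq_eval_zero q ▸
    tendsto_nhds_unique ((q.continuous.tendsto 0).comp hl0) hq_zero))

theorem tendsto_div_pow_nhdsNE_of_tendsto {F B : ℂ → ℂ} (hl : l ≤ 𝓝[≠] 0) (hp : p.degree < n)
    (hB : ContinuousAt B 0) (hF : ∀ᶠ z in 𝓝 0, F z = p.eval z + z ^ n * B z)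
    (h : Tendsto (fun z => F z / z ^ n) l (𝓝 b)) :
    Tendsto (fun z => F z / z ^ n) (𝓝[≠] 0) (𝓝 b) := by
  have hdiv : ∀ᶠ z in 𝓝[≠] 0, F z / z ^ n = p.eval z / z ^ n + B z := by
    filter_upwards [hF.filter_mono nhdsWithin_le_nhds, self_mem_nhdsWithin] with z hz hz0
    rw [hz, add_div, mul_div_cancel_left₀ _ (pow_ne_zero n hz0)]
  have hp0 : p = 0 := by
    refine eq_zero_of_tendsto_eval_div_pow hl hp
      ((h.sub (hB.mono_left (hl.trans nhdsWithin_le_nhds))).congr' ?_)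
    filter_upwards [hl hdiv] with z hz using sub_eq_of_eq_add hz
  have hFB : (fun z => F z / z ^ n) =ᶠ[𝓝[≠] 0] B := by
    filter_upwards [hdiv] with z hz
    rw [hz, hp0, eval_zero, zero_div, zero_add]
  have hB' : Tendsto B (𝓝[≠] 0) (𝓝 (B 0)) := hB.mono_left nhdsWithin_le_nhds
  rw [tendsto_nhds_unique (h.congr' (hl hFB)) (hB'.mono_left hl)]
  exact hB'.congr' hFB.symm

end Extension

section Gluing

variable {Ω U : Set ℂ} {S φ F g : ℂ → ℂ}

open scoped Classical in
theorem piecewise_eqOn_union {s : Set ℂ} (h : EqOn S φ s) : EqOn (Ω.piecewise S φ) S (Ω ∪ s) := by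
  intro z hz
  by_cases hzΩ : z ∈ Ω
  · exact piecewise_eq_of_mem _ _ _ hzΩ
  · rw [piecewise_eq_of_notMem _ _ _ hzΩ, h (hz.resolve_left hzΩ)]

open scoped Classical in
theorem isHolomorphicWhereNe_piecewise (hΩ : IsOpen Ω) (hU : IsOpen U) (hφ : ContDiffOn ℝ 1 φ U)
    (hSd : DifferentiableOn ℂ S Ω) (hS : ContinuousOn S (Ω ∪ frontier Ω ∩ U))
    (h : EqOn S φ (frontier Ω ∩ U)) : IsHolomorphicWhereNe (Ω.piecewise S φ) φ U where
  isOpen := hU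
  continuousOn := by
    refine .piecewise (fun z hz => h hz.symm) (hS.mono fun z hz => ?_)
      (hφ.continuousOn.mono inter_subset_left)
    rw [closure_eq_self_union_frontier] at hz
    exact hz.2.imp_right fun hzΩ => ⟨hzΩ, hz.1⟩
  contDiffOn := hφ
  differentiableAt z _ hne := by
    have hzΩ : z ∈ Ω := by_contra fun hzΩ => hne (piecewise_eq_of_notMem _ _ _ hzΩ)
    exact (hSd.differentiableAt (hΩ.mem_nhds hzΩ)).congr_of_eventuallyEq
      ((piecewise_eqOn Ω S φ).eventuallyEq_of_mem (hΩ.mem_nhds hzΩ))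

theorem IsHolomorphicWhereNe.exists_polynomial_eventually_eq {M : ℝ} {n : ℕ}
    (h : IsHolomorphicWhereNe F φ U) (h0 : 0 ∈ U) (hE : MeasurableSet {z | F z = φ z})
    (hg : Measurable g) (hgM : ∀ z, ‖g z‖ ≤ M) (hφ : ∀ z, dbar φ z = z ^ n * g z) :
    ∃ (p : Polynomial ℂ) (B : ℂ → ℂ), p.degree < n ∧ ContinuousAt B 0 ∧
      ∀ᶠ w in 𝓝 0, F w = p.eval w + w ^ n * B w := by
  refine HasWeakDbarOn.exists_polynomial_eventually_eq h.isOpen h0 h.continuousOn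
    (hg.indicator hE) (fun z => (norm_indicator_le_norm_self _ _).trans (hgM z)) ?_
  have hdbar : {z | F z = φ z}.indicator (dbar φ) =
      fun z => z ^ n * {z | F z = φ z}.indicator g z := by
    rw [funext hφ]
    exact funext fun z => indicator_mul_right _ _ _
  exact hdbar ▸ h.hasWeakDbarOn

theorem dbar_conj_mul_pow (n : ℕ) (z : ℂ) : dbar (fun z => conj' z * z ^ n) z = z ^ n := by
  have hid := HasWirtingerDerivAt.of_hasDerivAt (hasDerivAt_id z)
  have hpow := HasWirtingerDerivAt.of_hasDerivAt (hasDerivAt_pow n z)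
  simpa using (hid.conj.mul hpow).dbar_eq

end Gluing

theorem stmt_1_general (r : ℝ) (Ω : Set ℂ) (hΩopen : IsOpen Ω)
    (hacc : (0 : ℂ) ∈ closure ((frontier Ω ∩ ball 0 r) \ {0})) (n : ℕ) (S : ℂ → ℂ)
    (hShol : DifferentiableOn ℂ S Ω) (hScont : ContinuousOn S (Ω ∪ (frontier Ω ∩ ball 0 r)))
    (hSbdry : ∀ ζ ∈ frontier Ω ∩ ball 0 r, S ζ = conj' ζ * ζ ^ n) :
    Tendsto (fun z => S z / z ^ n) (𝓝[(Ω ∪ (frontier Ω ∩ ball 0 r)) \ {0}] 0) (𝓝 0) := by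
  classical
  obtain ⟨ζ, ⟨-, hζ⟩, -⟩ := closure_nonempty_iff.1 ⟨0, hacc⟩
  have := mem_closure_iff_nhdsWithin_neBot.1 hacc
  have hφ : ContDiff ℝ 1 fun z : ℂ => conj' z * z ^ n := conjCLE.contDiff.mul (contDiff_id.pow n)
  set F := Ω.piecewise S fun z => conj' z * z ^ n
  have hF : IsHolomorphicWhereNe F (fun z => conj' z * z ^ n) (ball 0 r) :=
    isHolomorphicWhereNe_piecewise hΩopen isOpen_ball hφ.contDiffOn hShol hScont hSbdry
  have hFm : Measurable F := hShol.continuousOn.measurable_piecewise hφ.continuous.continuousOn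
    hΩopen.measurableSet
  obtain ⟨p, B, hp, hB, hexp⟩ := hF.exists_polynomial_eventually_eq (g := 1) (M := 1)
    (mem_ball_self (pos_of_mem_ball hζ)) (measurableSet_eq_fun hFm hφ.continuous.measurable)
    measurable_one (fun _ => norm_one.le) fun z => (dbar_conj_mul_pow n z).trans (mul_one _).symm
  have hFS : EqOn F S (Ω ∪ (frontier Ω ∩ ball 0 r)) := piecewise_eqOn_union hSbdry
  have hF_frontier :
      Tendsto (fun z => F z / z ^ n) (𝓝[(frontier Ω ∩ ball 0 r) \ {0}] 0) (𝓝 0) := by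
    refine ((continuous_conj.tendsto' 0 0 (map_zero _)).mono_left nhdsWithin_le_nhds).congr' ?_
    filter_upwards [self_mem_nhdsWithin] with z ⟨hz, hz0⟩
    rw [hFS (.inr hz), hSbdry z hz, mul_div_cancel_right₀ _ (pow_ne_zero n hz0)]
  have hF_zero := tendsto_div_pow_nhdsNE_of_tendsto (nhdsWithin_mono _ fun _ hz => hz.2) hp hB hexp
    hF_frontier
  refine (hF_zero.mono_left (nhdsWithin_mono _ fun _ hz => hz.2)).congr' ?_
  filter_upwards [self_mem_nhdsWithin] with z hz
  rw [hFS hz.1]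

end

/-- If `S` is bounded holomorphic on `Ω`, continuous up to `Γ = ∂Ω ∩ D(0,r)` and
`S(ζ) = conj ζ · ζ^n` on `Γ`, then `S(z)/z^n → 0` as `z → 0` within `(Ω ∪ Γ) \ {0}`. -/
theorem stmt_1 (r : ℝ) (hr : 0 < r) (Ω : Set ℂ) (hΩopen : IsOpen Ω) (hΩsub : Ω ⊆ ball 0 r)
    (h0 : (0 : ℂ) ∈ frontier Ω)
    (hacc : (0 : ℂ) ∈ closure ((frontier Ω ∩ ball 0 r) \ {0}))
    (n : ℕ) (hn : 0 < n) (S : ℂ → ℂ)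
    (hShol : DifferentiableOn ℂ S Ω)
    (hScont : ContinuousOn S (Ω ∪ (frontier Ω ∩ ball 0 r)))
    (hSbdd : ∃ M : ℝ, ∀ z ∈ Ω, ‖S z‖ ≤ M)
    (hSbdry : ∀ ζ ∈ frontier Ω ∩ ball 0 r, S ζ = conj' ζ * ζ ^ n) :
    Tendsto (fun z => S z / z ^ n)
      (nhdsWithin 0 ((Ω ∪ (frontier Ω ∩ ball 0 r)) \ {0})) (nhds 0) :=
  stmt_1_general r Ω hΩopen hacc n S hShol hScont hSbdry
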